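/- Let A and B be two 0,1-matrices. If A is (a_1, a_2, a_3)-coverable and B is (b_1, b_2, b_3)-coverable, then R_B(A ⊗ B) ≤ a_1·b_1 + a_2·b_2 + a_3·b_3. -/

import Mathlib

/-!
If every two of `A₁, A₂, A₃` cover `A`, then each 1-entry of `A` is a 1-entry of at least two of the
`Aᵢ`, and all 1-entries of the `Aᵢ` are 1-entries of `A`; likewise for `B`. Two 2-element subsets
of `{1, 2, 3}` meet, so every 1-entry of `A ⊗ B` is a 1-entry of some `Aᵢ ⊗ Bᵢ`, and
`A ⊗ B` is the entrywise OR of the three products `Aᵢ ⊗ Bᵢ`. The bound follows from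
subadditivity of the Boolean rank under OR (`RB_le_add`) and its submultiplicativity under Kronecker
products (`RB_bkron_le`).
-/

/-- A collection of `s` Boolean matrices covers `A` if `A` has a 1 exactly where some
matrix of the collection has a 1. -/
def BCovers {α β : Type*} {s : ℕ} (M : Fin s → Matrix α β Bool) (A : Matrix α β Bool) : Prop :=
  ∀ i j, A i j = true ↔ ∃ t, M t i j = true

/-- A nonzero Boolean matrix whose 1-entries form a combinatorial rectangle. -/
def IsRank1 {α β : Type*} (M : Matrix α β Bool) : Prop :=
  (∃ i j, M i j = true) ∧ ∃ u : α → Bool, ∃ v : β → Bool, ∀ i j, M i j = (u i && v j)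

/-- The Boolean rank of a 0,1-matrix: the smallest `s` such that `A` is the entrywise
Boolean sum (OR) of `s` matrices of Boolean rank 1. -/
noncomputable def RB {α β : Type*} (A : Matrix α β Bool) : ℕ :=
  sInf {s | ∃ M : Fin s → Matrix α β Bool, (∀ t, IsRank1 (M t)) ∧ BCovers M A}

/-- The Kronecker product of Boolean matrices. -/
def bkron {α β γ δ : Type*} (A : Matrix α β Bool) (B : Matrix γ δ Bool) :
    Matrix (α × γ) (β × δ) Bool :=
  fun i j => A i.1 j.1 && B i.2 j.2

/-- The n × n matrix with zeros on the diagonal and ones everywhere else. -/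
def Cmat (n : ℕ) : Matrix (Fin n) (Fin n) Bool := fun i j => decide (i ≠ j)

/-- σ(n): the smallest k with n ≤ binom(k, ⌈k/2⌉). -/
noncomputable def sigmaFn (n : ℕ) : ℕ := sInf {k | n ≤ Nat.choose k ((k + 1) / 2)}

/-- (a₁,a₂,a₃)-coverability: three matrices of the given Boolean ranks, every two of
which cover `A`. -/
def Coverable3 {α β : Type*} (A : Matrix α β Bool) (a1 a2 a3 : ℕ) : Prop :=
  ∃ A1 A2 A3 : Matrix α β Bool,
    RB A1 ≤ a1 ∧ RB A2 ≤ a2 ∧ RB A3 ≤ a3 ∧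
    (∀ i j, A i j = true ↔ (A1 i j = true ∨ A2 i j = true)) ∧
    (∀ i j, A i j = true ↔ (A1 i j = true ∨ A3 i j = true)) ∧
    (∀ i j, A i j = true ↔ (A2 i j = true ∨ A3 i j = true))

/-- The number of 1-entries of a Boolean matrix. -/
def ones {α β : Type*} [Fintype α] [Fintype β] (A : Matrix α β Bool) : ℕ :=
  (Finset.univ.filter (fun p : α × β => A p.1 p.2 = true)).card

/-- The largest number of 1-entries in a monochromatic rectangle of ones of `A`. -/
noncomputable def maxRect {α β : Type*} [Fintype α] [Fintype β] (A : Matrix α β Bool) : ℕ :=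
  sSup {c | ∃ M : Matrix α β Bool,
    IsRank1 M ∧ (∀ i j, M i j = true → A i j = true) ∧ c = ones M}

/-- A cover by rectangles indexed by any finite type bounds the Boolean rank. -/
theorem RB_le_card {α β ι : Type*} [Fintype ι] {A : Matrix α β Bool} (M : ι → Matrix α β Bool)
    (hM : ∀ t, IsRank1 (M t)) (hA : ∀ i j, A i j = true ↔ ∃ t, M t i j = true) :
    RB A ≤ Fintype.card ι := by
  refine Nat.sInf_le ⟨fun t => M ((Fintype.equivFin ι).symm t), fun t => hM _, fun i j => ?_⟩
  rw [hA, (Fintype.equivFin ι).symm.surjective.exists]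

/-- For a finite matrix the infimum defining `RB` is attained: the set of admissible sizes is
nonempty because the 1-entries, taken as single-entry rectangles, cover the matrix. -/
theorem exists_cover_RB {α β : Type*} [Finite α] [Finite β] (A : Matrix α β Bool) :
    ∃ M : Fin (RB A) → Matrix α β Bool, (∀ t, IsRank1 (M t)) ∧ BCovers M A := by
  classical
  have := Fintype.ofFinite {x : α × β // A x.1 x.2 = true}
  refine Nat.sInf_mem (s := {s | ∃ M : Fin s → Matrix α β Bool,
    (∀ t, IsRank1 (M t)) ∧ BCovers M A}) ?_
  let e := Fintype.equivFin {x : α × β // A x.1 x.2 = true}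
  refine ⟨Fintype.card {x : α × β // A x.1 x.2 = true},
    fun t i j => decide (i = (e.symm t).1.1) && decide (j = (e.symm t).1.2),
    fun t => ⟨⟨(e.symm t).1.1, (e.symm t).1.2, by simp⟩, fun i => decide (i = (e.symm t).1.1),
      fun j => decide (j = (e.symm t).1.2), fun i j => rfl⟩, fun i j => ⟨fun h => ?_, ?_⟩⟩
  · exact ⟨e ⟨(i, j), h⟩, by simp⟩
  · rintro ⟨t, ht⟩
    simp only [Bool.and_eq_true, decide_eq_true_eq] at ht
    rw [ht.1, ht.2]
    exact (e.symm t).2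

theorem RB_le_add {α β : Type*} [Finite α] [Finite β] {A B C : Matrix α β Bool}
    (h : ∀ i j, C i j = true ↔ A i j = true ∨ B i j = true) : RB C ≤ RB A + RB B := by
  obtain ⟨M, hM, hMA⟩ := exists_cover_RB A
  obtain ⟨N, hN, hNB⟩ := exists_cover_RB B
  have := RB_le_card (A := C) (Sum.elim M N) (by rintro (t | t); exacts [hM t, hN t])
    (fun i j => by rw [h, hMA, hNB]; simp)
  simpa using this

theorem IsRank1.bkron {α β γ δ : Type*} {A : Matrix α β Bool} {B : Matrix γ δ Bool}
    (hA : IsRank1 A) (hB : IsRank1 B) : IsRank1 (bkron A B) := by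
  obtain ⟨⟨i, j, h⟩, u, v, huv⟩ := hA
  obtain ⟨⟨k, l, h'⟩, w, z, hwz⟩ := hB
  refine ⟨⟨(i, k), (j, l), by simp [_root_.bkron, h, h']⟩,
    fun x => u x.1 && w x.2, fun y => v y.1 && z y.2, fun x y => ?_⟩
  simp only [_root_.bkron, huv, hwz]
  ac_rfl

theorem RB_bkron_le {α β γ δ : Type*} [Finite α] [Finite β] [Finite γ] [Finite δ]
    (A : Matrix α β Bool) (B : Matrix γ δ Bool) : RB (bkron A B) ≤ RB A * RB B := by
  obtain ⟨M, hM, hMA⟩ := exists_cover_RB A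
  obtain ⟨N, hN, hNB⟩ := exists_cover_RB B
  have := RB_le_card (A := bkron A B) (fun t : Fin (RB A) × Fin (RB B) => bkron (M t.1) (N t.2))
    (fun t => (hM _).bkron (hN _))
    (fun i j => by simp [bkron, hMA i.1 j.1, hNB i.2 j.2])
  simpa using this

theorem rank_kronecker_coverable3 {n m p q : ℕ}
    (A : Matrix (Fin n) (Fin m) Bool) (B : Matrix (Fin p) (Fin q) Bool)
    (a1 a2 a3 b1 b2 b3 : ℕ)
    (hA : Coverable3 A a1 a2 a3) (hB : Coverable3 B b1 b2 b3) :
    RB (bkron A B) ≤ a1 * b1 + a2 * b2 + a3 * b3 := by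
  obtain ⟨A1, A2, A3, hA1, hA2, hA3, hA12, hA13, hA23⟩ := hA
  obtain ⟨B1, B2, B3, hB1, hB2, hB3, hB12, hB13, hB23⟩ := hB
  let D : Matrix (Fin n × Fin p) (Fin m × Fin q) Bool :=
    fun i j => bkron A1 B1 i j || bkron A2 B2 i j
  have hD : RB D ≤ RB (bkron A1 B1) + RB (bkron A2 B2) :=
    RB_le_add fun i j => by simp [D]
  have hC : RB (bkron A B) ≤ RB D + RB (bkron A3 B3) := by
    refine RB_le_add fun i j => ?_
    have h1 := hA12 i.1 j.1
    have h2 := hA13 i.1 j.1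
    have h3 := hA23 i.1 j.1
    have h4 := hB12 i.2 j.2
    have h5 := hB13 i.2 j.2
    have h6 := hB23 i.2 j.2
    simp only [D, bkron, Bool.or_eq_true, Bool.and_eq_true]
    -- Each of the two factors has a 1 in at least two of its three matrices: pigeonhole.
    grind
  calc RB (bkron A B)
      ≤ RB (bkron A1 B1) + RB (bkron A2 B2) + RB (bkron A3 B3) := by omega
    _ ≤ RB A1 * RB B1 + RB A2 * RB B2 + RB A3 * RB B3 := by
        gcongr <;> exact RB_bkron_le _ _
    _ ≤ a1 * b1 + a2 * b2 + a3 * b3 := by gcongr
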